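/- arXiv:1310.3265 — 3 statements merged into one kernel-verified Lean document; each statement's English description precedes it below -/
import Mathlib

section
/- Let q be a power of an odd prime with q ≡ 1 (mod 4), let n = q² + 1 and s = n/2. Then the q²-ary cyclotomic cosets modulo 2n satisfy: C_s = {s}, C_{3s} = {3s}, and for every integer i with 1 ≤ i ≤ s−1, the coset of s−2i is C_{s−2i} = {(s−2i) mod 2n, (s+2i) mod 2n}. -/
/-- The `q²`-ary cyclotomic coset of `x` modulo `N`, viewed as a subset of `ZMod N`:
`C_x = { x · q^(2k) mod N : k ∈ ℕ }`. -/
def cyclCoset (q N : ℕ) (x : ZMod N) : Set (ZMod N) :=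
  {y | ∃ k : ℕ, y = x * (q : ZMod N) ^ (2 * k)}

/-!
Since `q² ≡ n - 1` modulo `2n` and `n * x ≡ n` for odd `x`, multiplication by `q²` acts on the odd
residues as the reflection `x ↦ n - x`. Here `n = 2s`, and `s` is odd because `-1` is not a square
modulo `4`, so this reflection about `s` fixes `s` and `3s` and exchanges `s - 2i` with `s + 2i`.
-/

section Coset

variable {q N : ℕ} {x y : ZMod N} {S : Set (ZMod N)}

theorem self_mem_cyclCoset : x ∈ cyclCoset q N x :=
  ⟨0, by simp⟩

theorem mul_sq_mem_cyclCoset : x * (q : ZMod N) ^ 2 ∈ cyclCoset q N x :=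
  ⟨1, by rw [mul_one]⟩

theorem cyclCoset_subset (hx : x ∈ S) (hS : ∀ y ∈ S, y * (q : ZMod N) ^ 2 ∈ S) :
    cyclCoset q N x ⊆ S := by
  rintro _ ⟨k, rfl⟩
  induction k with
  | zero => simpa using hx
  | succ k ih => simpa only [mul_add, mul_one, pow_add, mul_assoc] using hS _ ih

theorem cyclCoset_eq_pair (hxy : x * (q : ZMod N) ^ 2 = y) (hyx : y * (q : ZMod N) ^ 2 = x) :
    cyclCoset q N x = {x, y} := by
  apply Set.Subset.antisymm
  · apply cyclCoset_subset (Set.mem_insert x {y})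
    rintro _ (rfl | rfl)
    · exact Or.inr hxy
    · exact Or.inl hyx
  · rintro _ (rfl | rfl)
    · exact self_mem_cyclCoset
    · exact hxy ▸ mul_sq_mem_cyclCoset

theorem cyclCoset_eq_singleton (hx : x * (q : ZMod N) ^ 2 = x) : cyclCoset q N x = {x} := by
  rw [cyclCoset_eq_pair hx hx, Set.pair_eq_singleton]

end Coset

section Reflection

theorem two_mul_natCast_self (n : ℕ) : (2 : ZMod (2 * n)) * n = 0 := by
  exact_mod_cast ZMod.natCast_self (2 * n)

variable {q n : ℕ} {x y : ZMod (2 * n)}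

theorem natCast_mul_eq_self_of_odd (hx : Odd x) : (n : ZMod (2 * n)) * x = n := by
  obtain ⟨m, rfl⟩ := hx
  linear_combination m * two_mul_natCast_self n

theorem mul_sq_eq_sub_of_odd (hq : (q : ZMod (2 * n)) ^ 2 = n - 1) (hx : Odd x) :
    x * (q : ZMod (2 * n)) ^ 2 = n - x := by
  linear_combination x * hq + natCast_mul_eq_self_of_odd hx

theorem cyclCoset_eq_pair_of_odd (hn : Even n) (hq : (q : ZMod (2 * n)) ^ 2 = n - 1)
    (hx : Odd x) (hxy : x + y = n) : cyclCoset q (2 * n) x = {x, y} := by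
  have hy : Odd y := by
    rw [eq_sub_of_add_eq' hxy]
    exact hn.natCast.sub_odd hx
  apply cyclCoset_eq_pair
  · rw [mul_sq_eq_sub_of_odd hq hx, ← hxy, add_sub_cancel_left]
  · rw [mul_sq_eq_sub_of_odd hq hy, ← hxy, add_sub_cancel_right]

theorem cyclCoset_eq_singleton_of_odd (hq : (q : ZMod (2 * n)) ^ 2 = n - 1)
    (hx : Odd x) (hxx : x + x = n) : cyclCoset q (2 * n) x = {x} := by
  apply cyclCoset_eq_singleton
  rw [mul_sq_eq_sub_of_odd hq hx, ← hxx, add_sub_cancel_right]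

end Reflection

theorem odd_of_sq_eq_two_mul_sub_one {a : ZMod 4} {s : ℕ} (ha : a ^ 2 = 2 * s - 1) :
    Odd s := by
  by_contra hs
  obtain ⟨t, rfl⟩ := even_iff_exists_two_mul.mp (Nat.not_odd_iff_even.mp hs)
  have four_eq_zero : (4 : ZMod 4) = 0 := rfl
  have sq_eq_neg_one : a ^ 2 = -1 := by
    push_cast at ha
    linear_combination ha + t * four_eq_zero
  have sq_ne_neg_one : ∀ b : ZMod 4, b ^ 2 ≠ -1 := by decide
  exact sq_ne_neg_one a sq_eq_neg_one

theorem odd_of_natCast_sq_eq_sub_one {q n s : ℕ} (hn : n = 2 * s)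
    (hq : (q : ZMod (2 * n)) ^ 2 = n - 1) : Odd s := by
  have four_dvd : 4 ∣ 2 * n := ⟨s, by omega⟩
  have sq_mod_four : (q : ZMod 4) ^ 2 = n - 1 := by
    simpa only [map_pow, map_sub, map_natCast, map_one] using
      congrArg (ZMod.castHom four_dvd (ZMod 4)) hq
  apply odd_of_sq_eq_two_mul_sub_one (a := q)
  rw [sq_mod_four, hn, Nat.cast_mul, Nat.cast_ofNat]

theorem cyclotomic_cosets_q2_plus_one_general {q n s : ℕ} (hn : n = 2 * s)
    (hq : (q : ZMod (2 * n)) ^ 2 = n - 1) :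
    cyclCoset q (2 * n) (s : ZMod (2 * n)) = {(s : ZMod (2 * n))} ∧
    cyclCoset q (2 * n) (3 * s : ZMod (2 * n)) = {(3 * s : ZMod (2 * n))} ∧
    ∀ i : ZMod (2 * n), cyclCoset q (2 * n) (s - 2 * i) = {s - 2 * i, s + 2 * i} := by
  have even_n : Even n := hn ▸ even_two_mul s
  have odd_s : Odd (s : ZMod (2 * n)) := (odd_of_natCast_sq_eq_sub_one hn hq).natCast
  have n_eq : (n : ZMod (2 * n)) = 2 * s := by exact_mod_cast congrArg Nat.cast hn
  refine ⟨cyclCoset_eq_singleton_of_odd hq odd_s ?_,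
    cyclCoset_eq_singleton_of_odd hq (Odd.mul ⟨1, by norm_num⟩ odd_s) ?_,
    fun i => cyclCoset_eq_pair_of_odd even_n hq (odd_s.sub_even (even_two_mul i)) ?_⟩
  · linear_combination -n_eq
  · linear_combination -3 * n_eq + two_mul_natCast_self n
  · linear_combination -n_eq

/-- Let `q ≡ 1 (mod 4)` be a power of an odd prime, `n = q² + 1`,
`s = n/2`.  Then the `q²`-ary cyclotomic cosets modulo `2n` satisfy `C_s = {s}`,
`C_{3s} = {3s}` and `C_{s-2i} = {s-2i, s+2i}` for `1 ≤ i ≤ s-1`. -/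
theorem cyclotomic_cosets_q2_plus_one (p e q n s : ℕ) (hp : p.Prime) (hpodd : Odd p)
    (he : 0 < e) (hq : q = p ^ e) (hq4 : q % 4 = 1)
    (hn : n = q ^ 2 + 1) (hs : s = n / 2) :
    cyclCoset q (2 * n) (s : ZMod (2 * n)) = {(s : ZMod (2 * n))} ∧
    cyclCoset q (2 * n) (3 * s : ZMod (2 * n)) = {(3 * s : ZMod (2 * n))} ∧
    ∀ i : ℕ, 1 ≤ i → i ≤ s - 1 →
      cyclCoset q (2 * n) ((s : ZMod (2 * n)) - 2 * i) =
        {(s : ZMod (2 * n)) - 2 * i, (s : ZMod (2 * n)) + 2 * i} := by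
  have odd_q : Odd q := Nat.odd_iff.mpr (by omega)
  have even_n : Even n := hn ▸ odd_q.pow.add_one
  have n_eq : n = 2 * s := by rw [hs, Nat.two_mul_div_two_of_even even_n]
  exact (cyclotomic_cosets_q2_plus_one_general n_eq (by simp [hn])).imp_right
    (And.imp_right fun coset_pair i _ _ => coset_pair i)
end

section
/- Let q be a power of an odd prime with q ≡ 1 (mod 4), let n = q² + 1, s = n/2, and let β be a primitive 2n-th root of unity in F_{q⁴}. For an integer i with 1 ≤ i ≤ s−1, let C be the negacyclic code of length n over F_{q²} generated by g(x) = M^{(s)}(x)·M^{(s+2)}(x)·⋯·M^{(s+2i)}(x), where M^{(j)}(x) is the minimal polynomial of β^j over F_{q²}. Then C is an MDS code with parameters [n, n−2i−1, 2i+2]_{q²}: its dimension over F_{q²} is n−2i−1 and its minimum Hamming distance equals 2i+2. -/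
/-!
Put `ζ = β ^ s` and `γ = β ^ 2`, so that `M^{(s+2j)}` is the minimal polynomial of `ζ γ ^ j`. The
Frobenius of `F` fixes `ζ`, because `q² ≡ 1 (mod 4)` and `ζ ^ 4 = 1`, and inverts `γ`, because
`γ ^ (q² + 1) = 1`. Hence the roots of `g` are the `2i + 1` elements `ζ γ ^ k` with `|k| ≤ i`. They
form a progression of ratio `γ`, so a nonzero codeword has weight at least `2i + 2` by the BCH
bound; since `g` has degree `2i + 1`, its own coefficient vector attains this weight.
-/

open Polynomial

/-- The polynomial `c₀ + c₁ x + ⋯ + c_{n-1} x^{n-1}` associated to the vector `c`. -/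
noncomputable def vecPoly {F : Type*} [Semiring F] {n : ℕ} (c : Fin n → F) : F[X] :=
  ∑ k : Fin n, Polynomial.C (c k) * X ^ (k : ℕ)

section VecPoly

variable {R : Type*} [Semiring R] {n : ℕ}

theorem vecPoly_eq_degreeLTEquiv_symm (c : Fin n → R) :
    vecPoly c = ((degreeLTEquiv R n).symm c : R[X]) := by
  simp only [vecPoly, C_mul_X_pow_eq_monomial]
  rfl

theorem vecPoly_degreeLTEquiv (f : degreeLT R n) : vecPoly (degreeLTEquiv R n f) = f := by
  rw [vecPoly_eq_degreeLTEquiv_symm, LinearEquiv.symm_apply_apply]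

theorem hammingNorm_degreeLTEquiv_le [DecidableEq R] (f : degreeLT R n) :
    hammingNorm (degreeLTEquiv R n f) ≤ (f : R[X]).natDegree + 1 := by
  refine le_trans ?_ (card_supp_le_succ_natDegree (f : R[X]))
  refine Finset.card_le_card_of_injOn Fin.val (fun k hk => ?_) Fin.val_injective.injOn
  exact mem_support_iff.2 (Finset.mem_filter.1 hk).2

theorem exists_dvd_vecPoly_hammingNorm_le [DecidableEq R] {g : R[X]} (hg : g ≠ 0)
    (hgn : g.natDegree < n) :
    ∃ c : Fin n → R, g ∣ vecPoly c ∧ c ≠ 0 ∧ hammingNorm c ≤ g.natDegree + 1 := by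
  let f : degreeLT R n := ⟨g, mem_degreeLT.2 ((natDegree_lt_iff_degree_lt hg).1 hgn)⟩
  refine ⟨degreeLTEquiv R n f, (vecPoly_degreeLTEquiv f).symm.dvd, ?_,
    hammingNorm_degreeLTEquiv_le f⟩
  exact (degreeLTEquiv_eq_zero_iff_eq_zero f.2).not.2 hg

theorem aeval_vecPoly {S A : Type*} [CommSemiring S] [Semiring A] [Algebra S A] (c : Fin n → S)
    (x : A) : aeval x (vecPoly c) = ∑ k, algebraMap S A (c k) * x ^ (k : ℕ) := by
  simp [vecPoly]

end VecPoly

section PolynomialCode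

variable {F : Type*} [Field F]

/-- The polynomial code of length `n` with generator `g`: the words whose polynomial is a multiple
of `g`. When `g` divides `x ^ n + 1`, this is the negacyclic code generated by `g`. -/
noncomputable def polynomialCode (g : F[X]) (n : ℕ) : Submodule F (Fin n → F) where
  carrier := {c | g ∣ vecPoly c}
  zero_mem' := by simp [vecPoly]
  add_mem' {a b} ha hb := by
    simpa only [Set.mem_ofPred_eq, vecPoly_eq_degreeLTEquiv_symm, map_add, Submodule.coe_add]
      using dvd_add ha hb
  smul_mem' r c hc := by
    simpa only [Set.mem_ofPred_eq, vecPoly_eq_degreeLTEquiv_symm, map_smul, Submodule.coe_smul,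
      smul_eq_C_mul] using hc.mul_left (C r)

/-- The syndrome of a word with respect to the generator `g`: the residue class of its polynomial
modulo `g`, which vanishes exactly on the code. -/
noncomputable def syndrome (g : F[X]) (n : ℕ) : (Fin n → F) →ₗ[F] F[X] ⧸ Ideal.span {g} :=
  (Ideal.Quotient.mkₐ F (Ideal.span {g})).toLinearMap ∘ₗ
    (degreeLT F n).subtype ∘ₗ (degreeLTEquiv F n).symm.toLinearMap

theorem syndrome_apply (g : F[X]) {n : ℕ} (c : Fin n → F) :
    syndrome g n c = Ideal.Quotient.mk (Ideal.span {g}) (vecPoly c) := by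
  rw [vecPoly_eq_degreeLTEquiv_symm]
  rfl

theorem ker_syndrome (g : F[X]) (n : ℕ) : LinearMap.ker (syndrome g n) = polynomialCode g n := by
  ext c
  rw [LinearMap.mem_ker, syndrome_apply, Ideal.Quotient.eq_zero_iff_dvd]
  rfl

theorem syndrome_surjective {g : F[X]} (hg : g ≠ 0) {n : ℕ} (hgn : g.natDegree ≤ n) :
    Function.Surjective (syndrome g n) := by
  intro y
  obtain ⟨f, rfl⟩ := Ideal.Quotient.mk_surjective y
  have hdeg : f % g ∈ degreeLT F n :=
    mem_degreeLT.2 ((degree_mod_lt f hg).trans_le (degree_le_of_natDegree_le hgn))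
  refine ⟨degreeLTEquiv F n ⟨f % g, hdeg⟩, ?_⟩
  rw [syndrome_apply, vecPoly_degreeLTEquiv, Ideal.Quotient.mk_eq_mk_iff_sub_mem,
    Ideal.mem_span_singleton, ← dvd_neg, neg_sub]
  exact Dvd.intro (f / g) (eq_sub_of_add_eq (EuclideanDomain.div_add_mod f g))

theorem finrank_polynomialCode {g : F[X]} (hg : g ≠ 0) {n : ℕ} (hgn : g.natDegree ≤ n) :
    Module.finrank F (polynomialCode g n) = n - g.natDegree := by
  have h := (syndrome g n).finrank_range_add_finrank_ker
  rw [LinearMap.range_eq_top.2 (syndrome_surjective hg hgn), finrank_top,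
    finrank_quotient_span_eq_natDegree, ker_syndrome, Module.finrank_fin_fun] at h
  omega

theorem natCard_polynomialCode [Fintype F] {g : F[X]} (hg : g ≠ 0) {n : ℕ}
    (hgn : g.natDegree ≤ n) :
    Nat.card (polynomialCode g n) = Fintype.card F ^ (n - g.natDegree) := by
  rw [Module.natCard_eq_pow_finrank (K := F), finrank_polynomialCode hg hgn,
    Nat.card_eq_fintype_card]

end PolynomialCode

section BCHBound

variable {A : Type*} [CommRing A] [IsDomain A]

theorem eq_zero_of_forall_sum_mul_pow_eq_zero {ι : Type*} {S : Finset ι} {x v : ι → A}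
    (hx : Set.InjOn x S) (h : ∀ t < S.card, ∑ k ∈ S, v k * x k ^ t = 0) {k : ι} (hk : k ∈ S) :
    v k = 0 := by
  let e := S.equivFin.symm
  have hxe : Function.Injective fun m => x (e m) := hx.injective.comp e.injective
  have hv : (fun m => v (e m)) = 0 := by
    refine Matrix.eq_zero_of_forall_pow_sum_mul_pow_eq_zero hxe fun t => ?_
    rw [e.sum_comp fun k : S => v k * x k ^ (t : ℕ),
      S.sum_coe_sort fun k => v k * x k ^ (t : ℕ)]
    exact h t t.2
  simpa [e] using congrFun hv (S.equivFin ⟨k, hk⟩)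

variable {R : Type*} [CommRing R] [Algebra R A] {n : ℕ}

theorem bch_bound [FaithfulSMul R A] [DecidableEq R] {α γ : A} (hα : α ≠ 0)
    (hγ : Function.Injective fun k : Fin n => γ ^ (k : ℕ)) {δ : ℕ} {c : Fin n → R} (hc : c ≠ 0)
    (h : ∀ t < δ, aeval (α * γ ^ t) (vecPoly c) = 0) : δ < hammingNorm c := by
  by_contra! hle
  let S : Finset (Fin n) := {k | c k ≠ 0}
  obtain ⟨k₀, hk₀⟩ := Function.ne_iff.1 hc
  have hsum (t : ℕ) (ht : t < S.card) :
      ∑ k ∈ S, algebraMap R A (c k) * α ^ (k : ℕ) * (γ ^ (k : ℕ)) ^ t = 0 := by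
    rw [← h t (ht.trans_le hle), aeval_vecPoly, Finset.sum_filter_of_ne]
    · refine Finset.sum_congr rfl fun k _ => ?_
      rw [mul_pow, pow_right_comm, mul_assoc]
    · rintro k - hne hck
      simp [hck] at hne
  have hzero := eq_zero_of_forall_sum_mul_pow_eq_zero hγ.injOn hsum
    (Finset.mem_filter.2 ⟨Finset.mem_univ k₀, hk₀⟩)
  refine mul_ne_zero ?_ (pow_ne_zero k₀ hα) hzero
  exact (map_ne_zero_iff _ (FaithfulSMul.algebraMap_injective R A)).2 hk₀

end BCHBound

section Frobenius

variable {F A : Type*} [Field F] [Fintype F] [CommRing A] [Algebra F A]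

theorem aeval_pow_card (f : F[X]) (a : A) :
    aeval (a ^ Fintype.card F) f = aeval a f ^ Fintype.card F := by
  rw [← expand_aeval, FiniteField.expand_card, map_pow]

variable [IsDomain A] {a : A}

theorem natDegree_minpoly_dvd_of_pow_card_pow_eq_self {m : ℕ}
    (ha : a ^ Fintype.card F ^ m = a) : (minpoly F a).natDegree ∣ m := by
  rcases eq_or_ne m 0 with rfl | hm
  · exact dvd_zero _
  have hmonic : (X ^ Fintype.card F ^ m - X : F[X]).Monic :=
    monic_X_pow_sub (degree_X_le.trans_lt
      (by exact_mod_cast Nat.one_lt_pow hm Fintype.one_lt_card))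
  have hroot : aeval a (X ^ Fintype.card F ^ m - X : F[X]) = 0 := by simp [ha]
  refine (minpoly.irreducible ⟨_, hmonic, hroot⟩).natDegree_dvd_of_dvd_X_pow_card_pow_sub_X ?_
  rw [Nat.card_eq_fintype_card]
  exact minpoly.dvd F a hroot

theorem natDegree_minpoly_eq_one_iff_pow_card_eq_self :
    (minpoly F a).natDegree = 1 ↔ a ^ Fintype.card F = a := by
  refine ⟨fun h => ?_, fun h => ?_⟩
  · obtain ⟨b, rfl⟩ := minpoly.natDegree_eq_one_iff.1 h
    rw [← map_pow, FiniteField.pow_card]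
  · exact Nat.dvd_one.1 (natDegree_minpoly_dvd_of_pow_card_pow_eq_self (by rwa [pow_one]))

theorem natDegree_minpoly_eq_two (h : a ^ Fintype.card F ≠ a)
    (h2 : (a ^ Fintype.card F) ^ Fintype.card F = a) : (minpoly F a).natDegree = 2 := by
  have hdvd : (minpoly F a).natDegree ∣ 2 :=
    natDegree_minpoly_dvd_of_pow_card_pow_eq_self (by rwa [sq, pow_mul])
  exact ((Nat.dvd_prime Nat.prime_two).1 hdvd).resolve_left
    (natDegree_minpoly_eq_one_iff_pow_card_eq_self.not.2 h)

end Frobenius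

theorem pow_pow_eq_self_of_pow_four_mul_eq_one {M : Type*} [Monoid M] {β : M} {s Q : ℕ}
    (hβ : β ^ (4 * s) = 1) (hQ : Q % 4 = 1) : (β ^ s) ^ Q = β ^ s := by
  rw [← Nat.div_add_mod Q 4, hQ, pow_succ, ← pow_mul, ← mul_assoc, mul_comm s 4, pow_mul, hβ,
    one_pow, one_mul]

theorem mul_zpow_pow_eq_mul_zpow_neg {G : Type*} [CommGroupWithZero G] {ζ γ : G} {Q : ℕ}
    (hζ : ζ ^ Q = ζ) (hγ : γ ^ (Q + 1) = 1) (k : ℤ) : (ζ * γ ^ k) ^ Q = ζ * γ ^ (-k) := by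
  have hinv : (γ ^ k) ^ Q = (γ ^ k)⁻¹ := by
    refine eq_inv_of_mul_eq_one_left ?_
    rw [← pow_succ, ← zpow_natCast, zpow_comm, zpow_natCast, hγ, one_zpow]
  rw [mul_pow, hζ, hinv, zpow_neg]

section GeneratorPoly

/-- The product of the minimal polynomials of `ζ, ζ γ, …, ζ γ ^ i`. For `ζ = β ^ s` and `γ = β ^ 2`
it is the generator `M^{(s)} M^{(s+2)} ⋯ M^{(s+2i)}`. -/
noncomputable def generatorPoly (F : Type*) {E : Type*} [Field F] [Field E] [Algebra F E]
    (ζ γ : E) (i : ℕ) : F[X] :=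
  ∏ j ∈ Finset.range (i + 1), minpoly F (ζ * γ ^ j)

variable {F E : Type*} [Field F] [Fintype F] [Field E] [Algebra F E] {ζ γ : E} {i : ℕ}

theorem natDegree_minpoly_mul_pow_eq_two (hζ0 : ζ ≠ 0) (hζ : ζ ^ Fintype.card F = ζ)
    (hγ : IsPrimitiveRoot γ (Fintype.card F + 1)) {j : ℕ} (hj : 0 < j)
    (hjn : 2 * j < Fintype.card F + 1) : (minpoly F (ζ * γ ^ j)).natDegree = 2 := by
  have hconj := mul_zpow_pow_eq_mul_zpow_neg hζ hγ.pow_eq_one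
  have hfrob := hconj j
  have hfrob2 := hconj (-j)
  rw [neg_neg] at hfrob2
  rw [← zpow_natCast]
  refine natDegree_minpoly_eq_two ?_ (by rw [hfrob, hfrob2])
  intro hfix
  rw [hfrob, mul_right_inj' hζ0, zpow_neg, zpow_natCast] at hfix
  have hγ0 : γ ≠ 0 := hγ.ne_zero (Nat.succ_ne_zero _)
  have hone : γ ^ (2 * j) = 1 := by
    rw [two_mul, pow_add]
    nth_rw 1 [← hfix]
    exact inv_mul_cancel₀ (pow_ne_zero j hγ0)
  exact hγ.pow_ne_one_of_pos_of_lt (by omega) hjn hone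

theorem natDegree_generatorPoly (hζ0 : ζ ≠ 0) (hζ : ζ ^ Fintype.card F = ζ)
    (hγ : IsPrimitiveRoot γ (Fintype.card F + 1)) (hi : 2 * i < Fintype.card F + 1) :
    (generatorPoly F ζ γ i).natDegree = 2 * i + 1 := by
  have hdeg_zero : (minpoly F (ζ * γ ^ 0)).natDegree = 1 := by
    rwa [pow_zero, mul_one, natDegree_minpoly_eq_one_iff_pow_card_eq_self]
  have hdeg_succ (j : ℕ) (hj : j < i) : (minpoly F (ζ * γ ^ (j + 1))).natDegree = 2 :=
    natDegree_minpoly_mul_pow_eq_two hζ0 hζ hγ j.succ_pos (by omega)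
  have hne (j : ℕ) (hj : j ∈ Finset.range (i + 1)) : minpoly F (ζ * γ ^ j) ≠ 0 := by
    refine ne_zero_of_natDegree_gt (n := 0) ?_
    rcases j with _ | j
    · omega
    · rw [hdeg_succ j (by simpa using hj)]
      exact two_pos
  rw [generatorPoly, natDegree_prod _ _ hne, Finset.sum_range_succ', hdeg_zero,
    Finset.sum_congr rfl fun j hj => hdeg_succ j (Finset.mem_range.1 hj), Finset.sum_const,
    Finset.card_range, smul_eq_mul, mul_comm]

theorem aeval_generatorPoly_eq_zero (hζ : ζ ^ Fintype.card F = ζ)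
    (hγ : γ ^ (Fintype.card F + 1) = 1) {k : ℤ} (hk : k.natAbs ≤ i) :
    aeval (ζ * γ ^ k) (generatorPoly F ζ γ i) = 0 := by
  have hroot : aeval (ζ * γ ^ (k.natAbs : ℤ)) (generatorPoly F ζ γ i) = 0 := by
    rw [zpow_natCast, generatorPoly, map_prod]
    exact Finset.prod_eq_zero (Finset.mem_range_succ_iff.2 hk) (minpoly.aeval F _)
  rcases k.natAbs_eq with h | h
  · rwa [h]
  · rw [h, ← mul_zpow_pow_eq_mul_zpow_neg hζ hγ, aeval_pow_card, hroot,
      zero_pow Fintype.card_ne_zero]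

theorem le_hammingNorm_of_generatorPoly_dvd [DecidableEq F] (hζ0 : ζ ≠ 0)
    (hζ : ζ ^ Fintype.card F = ζ) (hγ : IsPrimitiveRoot γ (Fintype.card F + 1))
    {c : Fin (Fintype.card F + 1) → F} (hdvd : generatorPoly F ζ γ i ∣ vecPoly c) (hc : c ≠ 0) :
    2 * i + 2 ≤ hammingNorm c := by
  have hγ0 : γ ≠ 0 := hγ.ne_zero (Nat.succ_ne_zero _)
  refine bch_bound (α := ζ * γ ^ (-i : ℤ)) (mul_ne_zero hζ0 (zpow_ne_zero _ hγ0))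
    (fun a b h => Fin.ext (hγ.pow_inj a.2 b.2 h)) hc fun t ht => ?_
  rw [mul_assoc, ← zpow_natCast, ← zpow_add₀ hγ0]
  exact aeval_eq_zero_of_dvd_aeval_eq_zero hdvd
    (aeval_generatorPoly_eq_zero hζ hγ.pow_eq_one (by omega))

end GeneratorPoly

theorem negacyclic_MDS_q2_plus_one_general {F E : Type*} [Field F] [Field E] [Algebra F E]
    [Fintype F] [DecidableEq F] {n i : ℕ} (hn : n = Fintype.card F + 1)
    (hi : 2 * i < Fintype.card F) {ζ γ : E} (hζ0 : ζ ≠ 0) (hζ : ζ ^ Fintype.card F = ζ)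
    (hγ : IsPrimitiveRoot γ n) :
    Nat.card {c : Fin n → F // generatorPoly F ζ γ i ∣ vecPoly c} =
      Fintype.card F ^ (n - 2 * i - 1) ∧
    (∀ c : Fin n → F, generatorPoly F ζ γ i ∣ vecPoly c → c ≠ 0 → 2 * i + 2 ≤ hammingNorm c) ∧
    (∃ c : Fin n → F, generatorPoly F ζ γ i ∣ vecPoly c ∧ c ≠ 0 ∧
      hammingNorm c = 2 * i + 2) := by
  subst hn
  have hdeg := natDegree_generatorPoly hζ0 hζ hγ (i := i) (by omega)
  have hg0 : generatorPoly F ζ γ i ≠ 0 := ne_zero_of_natDegree_gt (n := 0) (by omega)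
  have hbound (c : Fin (Fintype.card F + 1) → F) (hdvd : generatorPoly F ζ γ i ∣ vecPoly c)
      (hc : c ≠ 0) : 2 * i + 2 ≤ hammingNorm c :=
    le_hammingNorm_of_generatorPoly_dvd hζ0 hζ hγ hdvd hc
  refine ⟨?_, hbound, ?_⟩
  · rw [Nat.sub_sub, ← hdeg]
    exact natCard_polynomialCode hg0 (by omega)
  · obtain ⟨c, hdvd, hc, hle⟩ :=
      exists_dvd_vecPoly_hammingNorm_le hg0 (n := Fintype.card F + 1) (by omega)
    exact ⟨c, hdvd, hc, le_antisymm (hle.trans_eq (by rw [hdeg])) (hbound c hdvd hc)⟩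

/-- Let `q ≡ 1 (mod 4)` be a power of an odd prime, `n = q² + 1`,
`s = n/2`, and `β` a primitive `2n`-th root of unity in `E = F_{q⁴}`.  For
`1 ≤ i ≤ s - 1`, the negacyclic code `C` of length `n` over `F = F_{q²}` generated by
`g = M^{(s)} · M^{(s+2)} ⋯ M^{(s+2i)}` is an MDS code with parameters
`[n, n-2i-1, 2i+2]_{q²}`: it has `(q²)^(n-2i-1)` codewords (dimension `n-2i-1`) and
minimum Hamming distance exactly `2i + 2`. -/
theorem negacyclic_MDS_q2_plus_one (p e q n s i : ℕ) (hp : p.Prime) (hpodd : Odd p)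
    (he : 0 < e) (hq : q = p ^ e) (hq4 : q % 4 = 1)
    (hn : n = q ^ 2 + 1) (hs : s = n / 2) (hi1 : 1 ≤ i) (hi2 : i ≤ s - 1)
    (F E : Type*) [Field F] [Field E] [Algebra F E]
    [Fintype F] [Fintype E] [DecidableEq F]
    (hF : Fintype.card F = q ^ 2) (hE : Fintype.card E = q ^ 4)
    (β : E) (hβ : orderOf β = 2 * n)
    (g : F[X]) (hg : g = ∏ j ∈ Finset.range (i + 1), minpoly F (β ^ (s + 2 * j))) :
    Nat.card {c : Fin n → F // g ∣ vecPoly c} = (q ^ 2) ^ (n - 2 * i - 1) ∧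
    (∀ c : Fin n → F, g ∣ vecPoly c → c ≠ 0 → 2 * i + 2 ≤ hammingNorm c) ∧
    (∃ c : Fin n → F, g ∣ vecPoly c ∧ c ≠ 0 ∧ hammingNorm c = 2 * i + 2) := by
  have hq2 : q ^ 2 % 4 = 1 := by rw [Nat.pow_mod, hq4]
  have hβ' : IsPrimitiveRoot β (2 * n) := hβ ▸ IsPrimitiveRoot.orderOf β
  have hζ : (β ^ s) ^ Fintype.card F = β ^ s := by
    refine pow_pow_eq_self_of_pow_four_mul_eq_one ?_ (hF ▸ hq2)
    rw [show 4 * s = 2 * n by omega, hβ'.pow_eq_one]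
  have hg' : g = generatorPoly F (β ^ s) (β ^ 2) i := by
    simp only [hg, generatorPoly, pow_add, pow_mul]
  rw [hg', ← hF]
  exact negacyclic_MDS_q2_plus_one_general (hF ▸ hn) (by omega)
    (pow_ne_zero s (hβ'.ne_zero (by omega))) hζ (hβ'.pow (by omega) rfl)
end

section
/- Let q be a power of an odd prime with q ≡ 1 (mod 4), let n = q² + 1 and s = n/2. Let δ be an integer with 0 ≤ δ ≤ (q−1)/2 and let C be the q²-ary negacyclic code of length n whose defining set is Z = ∪_{i=0}^{δ} C_{s−2i}, the union of the q²-ary cyclotomic cosets modulo 2n of s, s−2, …, s−2δ. Then C contains its Hermitian dual: C^{⊥h} ⊆ C. -/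
/-!
Let `x` be a zero of `C`. For `γ ∈ F(x)`, conjugating the trace word `t ↦ Tr(γ xᵗ)` (raising its
entries to the power `q`) gives a word of `C`: evaluated at another zero `y`, it is a combination
of the geometric sums `∑ₜ (x ^ q ^ (2k+1) * y)ᵗ`, and these vanish because `Z ∩ -qZ = ∅`. If `u`
lies in the Hermitian dual, pairing it with this word gives `Tr(γ u(x)) = 0` for all `γ`, and so
`u(x) = 0` because the trace form is nondegenerate.

Modulo `2n = 4s`, multiplication by `q²` exchanges `s + 2a` and `s - 2a`, so every element of `Z`
is `s + 2a` for some `|a| ≤ (q-1)/2`. With `q = 4m + 1`, an equality `q(s + 2a) + (s + 2b) ≡ 0`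
would force `2s` to divide `s + qa + b`, which is impossible because `|qa + b| < s`.
-/

section Codes

variable {F E : Type*} [Field F] [Field E] [Algebra F E]

/-- The code of length `n` over `F` consisting of the words whose associated polynomial vanishes
at every point of `S`. If `S = {β ^ j | j ∈ Z}` consists of `n`-th roots of a common element of
`F`, this is the constacyclic code with defining set `Z`. -/
def codeWithZeros (F : Type*) {E : Type*} [Field F] [Field E] [Algebra F E] (n : ℕ) (S : Set E) :
    Set (Fin n → F) :=
  {c | ∀ y ∈ S, ∑ t : Fin n, algebraMap F E (c t) * y ^ (t : ℕ) = 0}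

/-- The dual of a code for the Hermitian form `∑ u_t c_t ^ q`, where `F` is meant to have `q²`
elements. -/
def hermitianDual {ι : Type*} [Fintype ι] (q : ℕ) (C : Set (ι → F)) : Set (ι → F) :=
  {u | ∀ c ∈ C, ∑ t, u t * c t ^ q = 0}

theorem mem_codeWithZeros_image_pow {n : ℕ} {β : E} {Z : Set ℕ} {c : Fin n → F} :
    c ∈ codeWithZeros F n ((β ^ ·) '' Z) ↔
      ∀ z ∈ Z, ∑ t : Fin n, algebraMap F E (c t) * β ^ ((t : ℕ) * z) = 0 := by
  simp only [codeWithZeros, Set.mem_ofPred_eq, Set.forall_mem_image, ← pow_mul, mul_comm _ (_ : ℕ)]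

theorem sum_algebraMap_mul_eq_zero_of_forall_trace {ι : Type*} [Fintype ι] [FiniteDimensional F E]
    [Algebra.IsSeparable F E] {u : ι → F} {v : ι → E}
    (h : ∀ γ : E, ∑ t, u t * Algebra.trace F E (γ * v t) = 0) :
    ∑ t, algebraMap F E (u t) * v t = 0 := by
  refine (traceForm_nondegenerate F E).1 _ fun γ => ?_
  rw [Algebra.traceForm_apply, ← h γ, mul_comm, Finset.mul_sum, map_sum]
  refine Finset.sum_congr rfl fun t _ => ?_
  rw [mul_left_comm, ← Algebra.smul_def, map_smul, smul_eq_mul]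

theorem geom_sum_fin_eq_zero_of_pow_eq_one {x : E} {n : ℕ} (hx : x ^ n = 1) (hx1 : x ≠ 1) :
    ∑ t : Fin n, x ^ (t : ℕ) = 0 := by
  rw [Fin.sum_univ_eq_sum_range (x ^ ·), geom_sum_eq hx1, hx, sub_self, zero_div]

variable [Finite F] {q n : ℕ}

theorem sum_pow_of_natCard_eq_sq (hF : Nat.card F = q ^ 2) {ι : Type*} (s : Finset ι)
    (f : ι → E) : (∑ t ∈ s, f t) ^ q = ∑ t ∈ s, f t ^ q := by
  have := Fintype.ofFinite F
  obtain ⟨p, _, m, hp, hm⟩ := FiniteField.card' F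
  have : Fact p.Prime := ⟨hp⟩
  have : CharP E p := charP_of_injective_algebraMap (algebraMap F E).injective p
  have hdvd : q ∣ p ^ (m : ℕ) := by
    rw [← hm, ← Nat.card_eq_fintype_card, hF]
    exact dvd_pow_self q two_ne_zero
  obtain ⟨e, -, rfl⟩ := (Nat.dvd_prime_pow hp).mp hdvd
  exact sum_pow_char_pow p e s f

theorem algebraMap_trace_pow_eq_sum_pow [Finite E] (hF : Nat.card F = q ^ 2) (x : E) :
    algebraMap F E (Algebra.trace F E x) ^ q =
      ∑ k ∈ Finset.range (Module.finrank F E), x ^ q ^ (2 * k + 1) := by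
  rw [FiniteField.algebraMap_trace_eq_sum_pow, sum_pow_of_natCard_eq_sq hF, hF]
  refine Finset.sum_congr rfl fun k _ => ?_
  rw [← pow_mul, ← pow_mul, ← pow_succ]

theorem trace_mul_pow_mem_codeWithZeros {K : Type*} [Field K] [Finite K] [Algebra F K]
    [Algebra K E] [IsScalarTower F K E] (hF : Nat.card F = q ^ 2) {S : Set E} {x : K}
    (hpow : ∀ y ∈ S, ∀ k, (algebraMap K E x ^ q ^ (2 * k + 1) * y) ^ n = 1)
    (hne : ∀ y ∈ S, ∀ k, algebraMap K E x ^ q ^ (2 * k + 1) * y ≠ 1) (γ : K) :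
    (fun t : Fin n => Algebra.trace F K (γ * x ^ (t : ℕ)) ^ q) ∈ codeWithZeros F n S := by
  intro y hy
  have hexpand (t : ℕ) : algebraMap F E (Algebra.trace F K (γ * x ^ t) ^ q) * y ^ t =
      ∑ k ∈ Finset.range (Module.finrank F K), algebraMap K E γ ^ q ^ (2 * k + 1) *
        (algebraMap K E x ^ q ^ (2 * k + 1) * y) ^ t := by
    rw [map_pow, IsScalarTower.algebraMap_apply F K E, ← map_pow,
      algebraMap_trace_pow_eq_sum_pow hF, map_sum, Finset.sum_mul]
    refine Finset.sum_congr rfl fun k _ => ?_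
    rw [map_pow, map_mul, map_pow]
    ring
  simp only [hexpand]
  rw [Finset.sum_comm]
  refine Finset.sum_eq_zero fun k _ => ?_
  rw [← Finset.mul_sum, geom_sum_fin_eq_zero_of_pow_eq_one (hpow y hy k) (hne y hy k), mul_zero]

theorem hermitianDual_codeWithZeros_subset (hF : Nat.card F = q ^ 2) {S : Set E}
    (hint : ∀ x ∈ S, IsIntegral F x)
    (hpow : ∀ x ∈ S, ∀ y ∈ S, ∀ k, (x ^ q ^ (2 * k + 1) * y) ^ n = 1)
    (hne : ∀ x ∈ S, ∀ y ∈ S, ∀ k, x ^ q ^ (2 * k + 1) * y ≠ 1) :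
    hermitianDual q (codeWithZeros F n S) ⊆ codeWithZeros F n S := by
  intro u hu x hx
  let K := IntermediateField.adjoin F {x}
  have : FiniteDimensional F K := IntermediateField.adjoin.finiteDimensional (hint x hx)
  have : Finite K := Module.finite_of_finite F
  let ξ : K := IntermediateField.AdjoinSimple.gen F x
  have hconj (a : F) : (a ^ q) ^ q = a := by
    have := Fintype.ofFinite F
    rw [← pow_mul, ← sq, ← hF, Nat.card_eq_fintype_card, FiniteField.pow_card]
  have htrace (γ : K) : ∑ t : Fin n, u t * Algebra.trace F K (γ * ξ ^ (t : ℕ)) = 0 := by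
    simpa only [hconj] using hu _ (trace_mul_pow_mem_codeWithZeros hF (hpow x hx) (hne x hx) γ)
  simpa [K, ξ] using congrArg (algebraMap K E) (sum_algebraMap_mul_eq_zero_of_forall_trace htrace)

theorem hermitianDual_constacyclic_subset (hF : Nat.card F = q ^ 2) (hn : 0 < n) {a : F}
    (ha : a ^ (q + 1) = 1) {S : Set E} (hroot : ∀ x ∈ S, x ^ n = algebraMap F E a)
    (hne : ∀ x ∈ S, ∀ y ∈ S, ∀ k, x ^ q ^ (2 * k + 1) * y ≠ 1) :
    hermitianDual q (codeWithZeros F n S) ⊆ codeWithZeros F n S := by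
  refine hermitianDual_codeWithZeros_subset hF
    (fun x hx => .of_pow hn (hroot x hx ▸ isIntegral_algebraMap)) (fun x hx y hy k => ?_) hne
  have hpow : a ^ (q ^ (2 * k + 1) + 1) = 1 := by
    have hdvd : q + 1 ∣ q ^ (2 * k + 1) + 1 := by
      simpa only [one_pow] using (odd_two_mul_add_one k).nat_add_dvd_pow_add_pow q 1
    exact orderOf_dvd_iff_pow_eq_one.mp ((orderOf_dvd_of_pow_eq_one ha).trans hdvd)
  rw [mul_pow, pow_right_comm, hroot x hx, hroot y hy, ← pow_succ, ← map_pow, hpow, map_one]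

theorem hermitianDual_negacyclic_subset (hF : Nat.card F = q ^ 2) (hq : Odd q) (hn : 0 < n)
    {β : E} (hβ : IsPrimitiveRoot β (2 * n)) {Z : Set ℕ} (hodd : ∀ z ∈ Z, Odd z)
    (hdisj : ∀ z ∈ Z, ∀ w ∈ Z, ∀ k, ¬ 2 * n ∣ z * q ^ (2 * k + 1) + w) :
    hermitianDual q (codeWithZeros F n ((β ^ ·) '' Z)) ⊆ codeWithZeros F n ((β ^ ·) '' Z) := by
  have hβn : β ^ n = -1 := (hβ.pow (by omega) (mul_comm 2 n)).eq_neg_one_of_two_right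
  refine hermitianDual_constacyclic_subset hF hn (a := -1) hq.add_one.neg_one_pow ?_ ?_
  · rintro _ ⟨z, hz, rfl⟩
    rw [pow_right_comm, hβn, (hodd z hz).neg_one_pow, map_neg, map_one]
  · rintro _ ⟨z, hz, rfl⟩ _ ⟨w, hw, rfl⟩ k h
    rw [← pow_mul, ← pow_add] at h
    exact hdisj z hz w hw k (hβ.dvd_of_pow_eq_one _ h)

end Codes

section Residues

theorem odd_of_sq_add_one_eq_two_mul {q s : ℕ} (hq : Odd q) (hs : q ^ 2 + 1 = 2 * s) : Odd s := by
  obtain ⟨m, rfl⟩ := hq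
  exact ⟨m ^ 2 + m, by linarith⟩

theorem add_two_mul_mul_pow_modEq {q s : ℤ} (hodd : Odd s) (hs : q ^ 2 + 1 = 2 * s) (a : ℤ)
    (k : ℕ) : (s + 2 * a) * q ^ (2 * k) ≡ s + 2 * ((-1) ^ k * a) [ZMOD 4 * s] := by
  have hstep (b : ℤ) : (s + 2 * b) * q ^ 2 ≡ s + 2 * -b [ZMOD 4 * s] := by
    obtain ⟨r, hr⟩ := hodd
    refine (Int.modEq_iff_dvd.mpr ⟨r + b, ?_⟩).symm
    linear_combination (s + 2 * b) * hs + 2 * s * hr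
  induction k with
  | zero => simp [Int.ModEq.refl]
  | succ k ih =>
    calc (s + 2 * a) * q ^ (2 * (k + 1))
        = (s + 2 * a) * q ^ (2 * k) * q ^ 2 := by ring
      _ ≡ (s + 2 * ((-1) ^ k * a)) * q ^ 2 [ZMOD 4 * s] := ih.mul_right _
      _ ≡ s + 2 * -((-1) ^ k * a) [ZMOD 4 * s] := hstep _
      _ = s + 2 * ((-1) ^ (k + 1) * a) := by ring

theorem not_dvd_add_two_mul_mul_add {q s a b : ℤ} (hq : q % 4 = 1) (hs : q ^ 2 + 1 = 2 * s)
    (ha : 2 * |a| < q) (hb : 2 * |b| < q) : ¬ 4 * s ∣ (s + 2 * a) * q + (s + 2 * b) := by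
  rintro ⟨c, hc⟩
  have hdvd : 2 * s ∣ s + (q * a + b) := by
    obtain ⟨m, hm⟩ : ∃ m, q = 4 * m + 1 := ⟨q / 4, by omega⟩
    refine ⟨c - m, mul_left_cancel₀ two_ne_zero ?_⟩
    linear_combination hc - s * hm
  have hlt : |q * a + b| < s := by
    have hq0 : 0 < q := (by positivity : 0 ≤ 2 * |a|).trans_lt ha
    have hle : |q * a + b| ≤ q * |a| + |b| := by
      simpa only [abs_mul, abs_of_pos hq0] using abs_add_le (q * a) b
    have hqa : q * (2 * |a|) ≤ q * (q - 1) := by gcongr; omega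
    linarith
  rw [abs_lt] at hlt
  have := Int.le_of_dvd (by linarith) hdvd
  linarith

end Residues

section DefiningSet

/-- The `Q`-ary cyclotomic coset of `a`, as the set of the integers `a * Q ^ k`, which are not
reduced modulo the order of the root of unity they are exponents of. -/
def cyclotomicCoset (Q a : ℕ) : Set ℕ :=
  Set.range fun k => a * Q ^ k

/-- The defining set `⋃ C_{s-2i}` over `0 ≤ i ≤ δ`, made of `q²`-ary cyclotomic cosets. The
subtraction is truncated, and is the intended one when `2δ ≤ s`. -/
def definingSet (q s δ : ℕ) : Set ℕ :=
  ⋃ i ≤ δ, cyclotomicCoset (q ^ 2) (s - 2 * i)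

variable {q s δ z w : ℕ}

theorem mem_definingSet : z ∈ definingSet q s δ ↔ ∃ i ≤ δ, ∃ k, (s - 2 * i) * q ^ (2 * k) = z := by
  simp only [definingSet, cyclotomicCoset, Set.mem_iUnion, Set.mem_range, exists_prop, pow_mul]

theorem odd_of_mem_definingSet (hq : Odd q) (hs : q ^ 2 + 1 = 2 * s) (hδ : 2 * δ < q)
    (hz : z ∈ definingSet q s δ) : Odd z := by
  obtain ⟨i, hi, k, rfl⟩ := mem_definingSet.mp hz
  have his : 2 * i ≤ s := by nlinarith
  exact (Nat.Odd.sub_even his (odd_of_sq_add_one_eq_two_mul hq hs) (even_two_mul i)).mul hq.pow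

theorem exists_modEq_of_mem_definingSet (hq : Odd q) (hs : q ^ 2 + 1 = 2 * s) (hδ : 2 * δ < q)
    (hz : z ∈ definingSet q s δ) (k : ℕ) :
    ∃ a : ℤ, 2 * |a| < q ∧ (z * q ^ (2 * k) : ℤ) ≡ s + 2 * a [ZMOD 4 * s] := by
  obtain ⟨i, hi, l, rfl⟩ := mem_definingSet.mp hz
  have hiq : 2 * i < q := by omega
  have his : 2 * i ≤ s := by nlinarith
  have hodd : Odd (s : ℤ) := mod_cast odd_of_sq_add_one_eq_two_mul hq hs
  refine ⟨(-1) ^ (l + k) * -i, by simpa [abs_mul] using mod_cast hiq, ?_⟩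
  convert add_two_mul_mul_pow_modEq (q := q) hodd (mod_cast hs) (-i) (l + k) using 1
  push_cast [his]
  ring

theorem not_dvd_of_mem_definingSet (hq : q % 4 = 1) (hs : q ^ 2 + 1 = 2 * s) (hδ : 2 * δ < q)
    (hz : z ∈ definingSet q s δ) (hw : w ∈ definingSet q s δ) (k : ℕ) :
    ¬ 2 * (q ^ 2 + 1) ∣ z * q ^ (2 * k + 1) + w := by
  have hodd : Odd q := Nat.odd_iff.mpr (by omega)
  obtain ⟨a, ha, hza⟩ := exists_modEq_of_mem_definingSet hodd hs hδ hz k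
  obtain ⟨b, hb, hwb⟩ := exists_modEq_of_mem_definingSet hodd hs hδ hw 0
  rw [mul_zero, pow_zero, mul_one] at hwb
  rw [hs, ← mul_assoc, pow_succ, ← mul_assoc, ← Int.natCast_dvd_natCast]
  push_cast
  rw [((hza.mul_right q).add hwb).dvd_iff]
  exact not_dvd_add_two_mul_mul_add (mod_cast hq) (mod_cast hs) ha hb

end DefiningSet

/-- Let `q ≡ 1 (mod 4)` be a power of an odd prime, `n = q² + 1`,
`s = n/2`, and `0 ≤ δ ≤ (q-1)/2`.  Let `C` be the `q²`-ary negacyclic code of length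
`n` with defining set `Z = ∪_{i=0}^{δ} C_{s-2i}` (union of `q²`-ary cyclotomic cosets
modulo `2n`), i.e. `c ∈ C` iff `c(β^j) = 0` for every `j ∈ Z`, where `β` is a fixed
primitive `2n`-th root of unity in an extension `E` of `F = F_{q²}`.  Then `C`
contains its Hermitian dual: `C^{⊥h} ⊆ C`. -/
theorem negacyclic_hermitian_dual_containing_q2_plus_one (p e q n s δ : ℕ)
    (hp : p.Prime) (hpodd : Odd p) (he : 0 < e) (hq : q = p ^ e) (hq4 : q % 4 = 1)
    (hn : n = q ^ 2 + 1) (hs : s = n / 2) (hδ : δ ≤ (q - 1) / 2)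
    (F E : Type*) [Field F] [Field E] [Algebra F E] [Fintype F]
    (hF : Fintype.card F = q ^ 2)
    (β : E) (hβ : orderOf β = 2 * n)
    (C : Set (Fin n → F))
    (hC : C = {c | ∀ i ≤ δ, ∀ k : ℕ,
      ∑ t : Fin n, algebraMap F E (c t) * β ^ ((t : ℕ) * ((s - 2 * i) * q ^ (2 * k))) = 0}) :
    {u : Fin n → F | ∀ c ∈ C, ∑ t : Fin n, u t * (c t) ^ q = 0} ⊆ C := by
  subst hn
  have hqodd : Odd q := Nat.odd_iff.mpr (by omega)
  have hs2 : q ^ 2 + 1 = 2 * s :=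
    hs ▸ (Nat.two_mul_div_two_of_even hqodd.pow.add_one).symm
  have hδq : 2 * δ < q := by omega
  have hCZ : C = codeWithZeros F (q ^ 2 + 1) ((β ^ ·) '' definingSet q s δ) := by
    ext c
    simp_rw [hC, Set.mem_ofPred_eq, mem_codeWithZeros_image_pow, mem_definingSet]
    exact ⟨fun h z ⟨i, hi, k, hz⟩ => hz ▸ h i hi k, fun h i hi k => h _ ⟨i, hi, k, rfl⟩⟩
  rw [hCZ]
  exact hermitianDual_negacyclic_subset (Nat.card_eq_fintype_card.trans hF) hqodd
    (Nat.succ_pos _) (IsPrimitiveRoot.iff_orderOf.mpr hβ)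
    (fun _ => odd_of_mem_definingSet hqodd hs2 hδq)
    (fun _ hz _ hw => not_dvd_of_mem_definingSet hq4 hs2 hδq hz hw)
end
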